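/- arXiv:2303.01687 — 2 statements merged into one kernel-verified Lean document; each statement's English description precedes it below -/
import Mathlib

section
/- (Gaussian mechanism) Let 0 < ε ≤ 1, 0 < δ < 1, Δ > 0, and set σ = √(2 ln(1.25/δ)) / ε. Let γ_μ denote the Gaussian measure on ℝ^d with mean μ and covariance σ²Δ² I_d (i.e. coordinates independent N(μ_i, σ²Δ²)). Then for any μ₁, μ₂ ∈ ℝ^d with ‖μ₁ − μ₂‖₂ ≤ Δ and any measurable set S ⊆ ℝ^d: γ_{μ₁}(S) ≤ e^ε · γ_{μ₂}(S) + δ. -/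
/-!
Write `c = √(2 ln (1.25 / δ))`, so that `σ = c / ε`, and let `γ₁`, `γ₂` be the two Gaussian
measures. With `η = ‖μ₁ - μ₂‖ / (σ Δ) ≤ ε / c`, the privacy loss `log (dγ₁ / dγ₂)` equals
`η Z + η² / 2`, where `Z` is the normalised component of `x - μ₁` along `μ₁ - μ₂`; under `γ₁` it is
a standard Gaussian. Where the loss is at most `ε`, the density bound gives the term `e^ε γ₂(S)`.
The remaining event forces `Z > ε / η - η / 2 ≥ c - ε / (2 c) =: t`, so it is enough that
`P(Z > t) ≤ δ = 1.25 exp (-c² / 2)`.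

If `t ≥ 0`, the bound `P(Z > t) ≤ exp (-t² / 2) / 2` suffices: since `t² ≥ c² - ε` and `ε ≤ 1`,
it is at most `exp (1 / 2) / 2 * exp (-c² / 2)`, and `exp (1 / 2) ≤ 2`. If `t < 0`, then
`c² < 1 / 2`, so `δ` is close to `1`, while `|t|` is small and `P(Z > t) ≤ 1 / 2 + |t|`.
-/

open MeasureTheory ProbabilityTheory
open scoped BigOperators

/-- Products commute with densities: a product of measures with densities has the product
density. -/
lemma pi_withDensity_prod {ι : Type*} [Fintype ι] (m : ι → Measure ℝ)
    [∀ i, IsProbabilityMeasure (m i)] (f : ι → ℝ → ENNReal) (hf : ∀ i, Measurable (f i))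
    [∀ i, IsProbabilityMeasure ((m i).withDensity (f i))] :
    Measure.pi (fun i => (m i).withDensity (f i)) =
      (Measure.pi m).withDensity (fun x => ∏ i, f i (x i)) := by
  refine Measure.pi_eq fun s hs => ?_
  have hind : iIndepFun (fun i (x : ι → ℝ) => (s i).indicator (f i) (x i)) (Measure.pi m) :=
    iIndepFun_pi (fun i => ((hf i).indicator (hs i)).aemeasurable)
  have hmeas : ∀ i, Measurable (fun x : ι → ℝ => (s i).indicator (f i) (x i)) := fun i =>
    ((hf i).indicator (hs i)).comp (measurable_pi_apply i)
  have key := lintegral_prod_eq_prod_lintegral_of_indepFun Finset.univ _ hind hmeas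
  rw [withDensity_apply _ (MeasurableSet.univ_pi hs),
    ← lintegral_indicator (MeasurableSet.univ_pi hs)]
  have hbox : (Set.univ.pi s).indicator (fun x : ι → ℝ => ∏ i, f i (x i)) =
      fun x => ∏ i, (s i).indicator (f i) (x i) := by
    ext x
    by_cases hx : x ∈ Set.univ.pi s
    · rw [Set.indicator_of_mem hx]
      exact Finset.prod_congr rfl fun i _ => by rw [Set.indicator_of_mem (hx i trivial)]
    · rw [Set.indicator_of_notMem hx]
      simp only [Set.mem_univ_pi, not_forall] at hx
      obtain ⟨i, hi⟩ := hx
      exact (Finset.prod_eq_zero (Finset.mem_univ i) (Set.indicator_of_notMem hi _)).symm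
  rw [hbox, key]
  refine Finset.prod_congr rfl fun i _ => ?_
  rw [withDensity_apply _ (hs i), ← lintegral_indicator (hs i)]
  exact (measurePreserving_eval m i).lintegral_comp ((hf i).indicator (hs i))

/-- The density of one Gaussian with respect to another of the same variance. The exponent is
written in terms of `x - a`, the variable that is centred under the measure on the left. -/
lemma gaussianReal_eq_withDensity_gaussianReal (a b : ℝ) {v : NNReal} (hv : v ≠ 0) :
    gaussianReal a v = (gaussianReal b v).withDensity
      (fun x => ENNReal.ofReal
        (Real.exp (((a - b) * (x - a)) / v + (a - b) ^ 2 / (2 * v)))) := by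
  have hv' : (v : ℝ) ≠ 0 := by exact_mod_cast hv
  rw [gaussianReal_of_var_ne_zero _ hv, gaussianReal_of_var_ne_zero _ hv,
    ← withDensity_mul _ (measurable_gaussianPDF _ _) (by fun_prop)]
  congr 1
  ext x
  simp only [Pi.mul_apply, gaussianPDF]
  rw [← ENNReal.ofReal_mul (gaussianPDFReal_nonneg _ _ _)]
  simp only [gaussianPDFReal]
  rw [mul_assoc _ (Real.exp _) (Real.exp _), ← Real.exp_add]
  congr 3
  field_simp
  ring

/-- A linear functional of a centred isotropic Gaussian vector is a centred Gaussian whose variance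
is scaled by the squared Euclidean norm of the functional. -/
lemma pi_gaussianReal_map_linear {d : ℕ} (m b : Fin d → ℝ) (v : NNReal) :
    (Measure.pi fun i => gaussianReal (m i) v).map (fun x => ∑ i, b i * (x i - m i)) =
      gaussianReal 0 (Real.toNNReal (v * ∑ i, b i ^ 2)) := by
  set P := Measure.pi fun i => gaussianReal (m i) v with hP
  have hlaw : ∀ i, P.map (fun x : Fin d → ℝ => b i * (x i - m i)) =
      gaussianReal 0 (NNReal.mk (b i ^ 2) (sq_nonneg _) * v) := by
    intro i
    have h1 : P.map (fun x : Fin d → ℝ => x i) = gaussianReal (m i) v :=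
      (measurePreserving_eval (fun i => gaussianReal (m i) v) i).map_eq
    have h2 : (fun x : Fin d → ℝ => b i * (x i - m i)) =
        (fun y => b i * y) ∘ (fun y => y - m i) ∘ fun x => x i := rfl
    rw [h2, ← Measure.map_map (by fun_prop) (by fun_prop),
      ← Measure.map_map (by fun_prop) (by fun_prop), h1, gaussianReal_map_sub_const,
      gaussianReal_map_const_mul]
    simp
  have hind : iIndepFun (fun i (x : Fin d → ℝ) => b i * (x i - m i)) P :=
    iIndepFun_pi (X := fun i (y : ℝ) => b i * (y - m i)) (fun i => by fun_prop)
  have hG : ∀ i, HasGaussianLaw (fun x : Fin d → ℝ => b i * (x i - m i)) P := fun i =>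
    ⟨by rw [hlaw i]; infer_instance⟩
  have hsum := hind.hasGaussianLaw_fun_sum hG
  have hgauss := hsum.isGaussian_map
  rw [IsGaussian.eq_gaussianReal _ hgauss]
  have hm : ∀ i, Measurable (fun x : Fin d → ℝ => b i * (x i - m i)) := fun i => by fun_prop
  have hsm : Measurable (fun x : Fin d → ℝ => ∑ i, b i * (x i - m i)) := by fun_prop
  have hint : ∀ i, ∫ x, b i * (x i - m i) ∂P = 0 := by
    intro i
    rw [← integral_map (f := fun y : ℝ => y) (φ := fun x : Fin d → ℝ => b i * (x i - m i))
      (hm i).aemeasurable (by fun_prop), hlaw i, integral_id_gaussianReal]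
  have hvar : ∀ i, Var[fun x : Fin d → ℝ => b i * (x i - m i); P] = b i ^ 2 * v := by
    intro i
    have := variance_map (X := id) (Y := fun x : Fin d → ℝ => b i * (x i - m i)) (μ := P)
      (by fun_prop) (hm i).aemeasurable
    rw [hlaw i, variance_id_gaussianReal] at this
    exact this.symm
  congr 1
  · rw [integral_map hsm.aemeasurable (by fun_prop)]
    simp only [id]
    rw [integral_finsetSum _ fun i _ => (hG i).integrable]
    simp [hint]
  · congr 1
    rw [variance_map (by fun_prop) hsm.aemeasurable]
    have h := IndepFun.variance_sum (μ := P) (X := fun i (x : Fin d → ℝ) => b i * (x i - m i))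
      (s := Finset.univ) (fun i _ => (hG i).memLp_two)
      (fun i _ j _ hij => hind.indepFun hij)
    simp_rw [hvar] at h
    rw [← Finset.sum_mul, mul_comm] at h
    rw [← h]
    congr 1
    ext x
    simp

lemma gaussianReal_Ioi_zero_le : gaussianReal 0 1 (Set.Ioi 0) ≤ ENNReal.ofReal (1 / 2) := by
  have h : gaussianReal 0 1 (Set.Iio 0) = gaussianReal 0 1 (Set.Ioi 0) := by
    have := gaussianReal_map_neg (μ := 0) (v := 1)
    rw [neg_zero] at this
    conv_lhs => rw [← this]
    rw [Measure.map_apply measurable_neg measurableSet_Iio]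
    congr 1
    ext x
    simp
  have hd : Disjoint (Set.Iio (0 : ℝ)) (Set.Ioi 0) :=
    Set.disjoint_left.2 fun x hx hx' => lt_asymm (Set.mem_Iio.1 hx) hx'
  have h1 := measure_union (μ := gaussianReal 0 1) hd measurableSet_Ioi
  have h2 : gaussianReal 0 1 (Set.Iio 0 ∪ Set.Ioi 0) ≤ 1 := prob_le_one
  rw [h1, h, ← two_mul, mul_comm] at h2
  rw [one_div, ENNReal.ofReal_inv_of_pos two_pos, ENNReal.ofReal_ofNat]
  rw [← one_div]
  exact ENNReal.le_div_iff_mul_le (by simp) (by simp) |>.2 h2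

/-- The Gaussian tail bound with the constant `1 / 2`, obtained by shifting the tail to the positive
half-line. The Chernoff bound, with constant `1`, would be too weak: `1.25 < exp (1 / 2)`. -/
lemma gaussianReal_Ioi_le {t : ℝ} (ht : 0 ≤ t) :
    gaussianReal 0 1 (Set.Ioi t) ≤ ENNReal.ofReal (Real.exp (-t ^ 2 / 2) / 2) := by
  have h : gaussianReal 0 1 (Set.Ioi t) = gaussianReal (-t) 1 (Set.Ioi 0) := by
    have := gaussianReal_map_sub_const (μ := 0) (v := 1) t
    rw [zero_sub] at this
    rw [← this, Measure.map_apply (by fun_prop) measurableSet_Ioi]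
    congr 1
    ext x
    simp
  rw [h, gaussianReal_eq_withDensity_gaussianReal (-t) 0 one_ne_zero,
    withDensity_apply _ measurableSet_Ioi]
  calc _ ≤ ∫⁻ _ in Set.Ioi (0 : ℝ), ENNReal.ofReal (Real.exp (-t ^ 2 / 2)) ∂gaussianReal 0 1 := by
        refine setLIntegral_mono measurable_const fun x hx => ENNReal.ofReal_le_ofReal ?_
        have hx' : 0 < x := hx
        refine Real.exp_le_exp.2 ?_
        norm_num
        nlinarith [mul_nonneg ht hx'.le]
    _ ≤ ENNReal.ofReal (Real.exp (-t ^ 2 / 2)) * ENNReal.ofReal (1 / 2) := by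
        rw [setLIntegral_const]
        gcongr
        exact gaussianReal_Ioi_zero_le
    _ = _ := by
        rw [← ENNReal.ofReal_mul (Real.exp_pos _).le]
        ring_nf

lemma gaussianReal_Ioi_le_of_neg {t : ℝ} (ht : t ≤ 0) :
    gaussianReal 0 1 (Set.Ioi t) ≤ ENNReal.ofReal (1 / 2 - t) := by
  have hpdf : ∀ x, gaussianPDF 0 1 x ≤ 1 := by
    intro x
    rw [gaussianPDF, ENNReal.ofReal_le_one, gaussianPDFReal]
    have h1 : (√(2 * Real.pi * (1 : NNReal)))⁻¹ ≤ 1 := by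
      refine inv_le_one_of_one_le₀ (Real.one_le_sqrt.2 ?_)
      have := Real.pi_gt_three
      norm_num
      linarith
    refine mul_le_one₀ h1 (Real.exp_pos _).le (Real.exp_le_one_iff.2 ?_)
    norm_num
    linarith [sq_nonneg x]
  have hIoc : gaussianReal 0 1 (Set.Ioc t 0) ≤ ENNReal.ofReal (0 - t) := by
    rw [gaussianReal_apply _ one_ne_zero, ← Real.volume_Ioc, ← setLIntegral_one]
    exact lintegral_mono hpdf
  rw [← Set.Ioc_union_Ioi_eq_Ioi ht]
  refine (measure_union_le _ _).trans ((add_le_add hIoc gaussianReal_Ioi_zero_le).trans ?_)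
  rw [← ENNReal.ofReal_add (by linarith) (by norm_num)]
  exact ENNReal.ofReal_le_ofReal (by linarith)

/-- The calibration of `σ`: with `c = σ ε`, the privacy loss exceeds `ε` only if a standard Gaussian
exceeds `c - ε / (2 c)`, which has probability at most `δ`. -/
lemma gaussianReal_Ioi_le_delta {ε δ c : ℝ} (hε1 : ε ≤ 1) (hδ : 0 < δ) (hδ1 : δ < 1)
    (hc : 0 < c) (hc2 : c ^ 2 = 2 * Real.log (1.25 / δ)) :
    gaussianReal 0 1 (Set.Ioi (c - ε / (2 * c))) ≤ ENNReal.ofReal δ := by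
  have hδexp : Real.exp (-c ^ 2 / 2) = δ / 1.25 := by
    rw [show -c ^ 2 / 2 = -Real.log (1.25 / δ) by linarith, Real.exp_neg,
      Real.exp_log (by positivity), inv_div]
  have hsq : (c - ε / (2 * c)) ^ 2 = c ^ 2 - ε + (ε / (2 * c)) ^ 2 := by
    field_simp
    ring
  rcases le_or_gt 0 (c - ε / (2 * c)) with ht | ht
  · refine (gaussianReal_Ioi_le ht).trans (ENNReal.ofReal_le_ofReal ?_)
    -- `exp (1 / 2) ≤ 2`, so half of `exp (1 / 2) * δ / 1.25` is at most `δ`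
    have he : Real.exp (1 / 2) ≤ 2 := by
      have h := Real.exp_one_lt_d9
      have h2 : Real.exp (1 / 2) * Real.exp (1 / 2) = Real.exp 1 := by
        rw [← Real.exp_add]; norm_num
      nlinarith [Real.exp_pos (1 / 2)]
    have h1 : Real.exp (-(c - ε / (2 * c)) ^ 2 / 2) ≤ Real.exp (-c ^ 2 / 2) * Real.exp (1 / 2) := by
      rw [← Real.exp_add]
      refine Real.exp_le_exp.2 ?_
      rw [hsq]
      nlinarith [sq_nonneg (ε / (2 * c))]
    rw [hδexp] at h1
    have h2 : δ / 1.25 * Real.exp (1 / 2) ≤ δ / 1.25 * 2 := by gcongr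
    norm_num at h1 h2 ⊢
    linarith
  · refine (gaussianReal_Ioi_le_of_neg ht.le).trans (ENNReal.ofReal_le_ofReal ?_)
    -- here `0.4 ≤ c ^ 2 < 1 / 2`, which forces `δ` to be close to `1`
    have hlt : c ^ 2 < 1 / 2 := by
      have : c < ε / (2 * c) := by linarith
      rw [lt_div_iff₀ (by positivity)] at this
      nlinarith
    have hge : 0.4 ≤ c ^ 2 := by
      have h := Real.one_sub_inv_le_log_of_pos (x := 1.25 / δ) (by positivity)
      rw [inv_div] at h
      norm_num at h hc2 ⊢
      linarith
    have hδge : 0.93 ≤ δ := by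
      have h := Real.add_one_le_exp (-c ^ 2 / 2)
      rw [hδexp] at h
      norm_num at h ⊢
      linarith
    have hc' : 0.63 ≤ c := by
      norm_num at hge ⊢
      nlinarith
    have hdiv : ε / (2 * c) ≤ 0.8 := by
      rw [div_le_iff₀ (by positivity)]
      norm_num at hc' ⊢
      linarith
    norm_num at hdiv hc' hδge ⊢
    linarith

/-- The Gaussian mechanism: let `0 < ε ≤ 1`, `0 < δ < 1`, `Δ > 0`, and
`σ = √(2 ln(1.25/δ)) / ε`. Writing `γ_μ` for the Gaussian measure on `ℝ^d` with mean `μ`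
and covariance `σ²Δ² I_d` (independent coordinates `N(μ_i, σ²Δ²)`), for any `μ₁, μ₂` with
`‖μ₁ − μ₂‖₂ ≤ Δ` and any measurable `S ⊆ ℝ^d` we have
`γ_{μ₁}(S) ≤ e^ε γ_{μ₂}(S) + δ`. -/
theorem gaussian_mechanism (d : ℕ) (ε δ Δ σ : ℝ)
    (hε : 0 < ε) (hε1 : ε ≤ 1) (hδ : 0 < δ) (hδ1 : δ < 1) (hΔ : 0 < Δ)
    (hσ : σ = Real.sqrt (2 * Real.log (1.25 / δ)) / ε)
    (μ₁ μ₂ : Fin d → ℝ)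
    (hμ : Real.sqrt (∑ i, (μ₁ i - μ₂ i) ^ 2) ≤ Δ)
    (S : Set (Fin d → ℝ)) (hS : MeasurableSet S) :
    (Measure.pi fun i => gaussianReal (μ₁ i) ⟨σ ^ 2 * Δ ^ 2, by positivity⟩) S ≤
      ENNReal.ofReal (Real.exp ε) *
        (Measure.pi fun i => gaussianReal (μ₂ i) ⟨σ ^ 2 * Δ ^ 2, by positivity⟩) S +
      ENNReal.ofReal δ := by
  have hlog : 0 < Real.log (1.25 / δ) := by
    refine Real.log_pos ?_
    rw [lt_div_iff₀ hδ]
    norm_num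
    linarith
  set c := Real.sqrt (2 * Real.log (1.25 / δ)) with hc_def
  have hc : 0 < c := Real.sqrt_pos.2 (by positivity)
  have hc2 : c ^ 2 = 2 * Real.log (1.25 / δ) := Real.sq_sqrt (by positivity)
  have hσ0 : 0 < σ := hσ ▸ div_pos hc hε
  set v : NNReal := ⟨σ ^ 2 * Δ ^ 2, by positivity⟩ with hv_def
  have hv : (v : ℝ) = (σ * Δ) ^ 2 := by rw [mul_pow]; rfl
  have hv0 : v ≠ 0 := by
    rw [← NNReal.coe_ne_zero, hv]
    positivity
  set r := Real.sqrt (∑ i, (μ₁ i - μ₂ i) ^ 2) with hr_def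
  have hr2 : r ^ 2 = ∑ i, (μ₁ i - μ₂ i) ^ 2 :=
    Real.sq_sqrt (Finset.sum_nonneg fun i _ => sq_nonneg _)
  have hr0 : 0 ≤ r := Real.sqrt_nonneg _
  clear_value r
  rcases hr0.eq_or_lt with hr | hr
  · have h0 : μ₁ = μ₂ := by
      rw [← hr, eq_comm, zero_pow two_ne_zero,
        Finset.sum_eq_zero_iff_of_nonneg fun i _ => sq_nonneg _] at hr2
      ext i
      exact sub_eq_zero.1 (pow_eq_zero_iff two_ne_zero |>.1 (hr2 i (Finset.mem_univ i)))
    rw [h0]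
    refine le_add_right (le_mul_of_one_le_left zero_le ?_)
    rw [ENNReal.one_le_ofReal]
    exact Real.one_le_exp hε.le
  · set τ := σ * Δ with hτ_def
    have hτ : 0 < τ := mul_pos hσ0 hΔ
    set Z : (Fin d → ℝ) → ℝ := fun x => ∑ i, ((μ₁ i - μ₂ i) / (τ * r)) * (x i - μ₁ i) with hZ
    have hZm : Measurable Z := by fun_prop
    have hZlaw : (Measure.pi fun i => gaussianReal (μ₁ i) v).map Z = gaussianReal 0 1 := by
      rw [hZ, pi_gaussianReal_map_linear]
      congr 1
      rw [← Real.toNNReal_one]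
      congr 1
      simp_rw [div_pow]
      rw [← Finset.sum_div, ← hr2, hv]
      field_simp
    set η := r / τ with hη_def
    have hη : 0 < η := div_pos hr hτ
    have hηle : η ≤ ε / c := by
      rw [hη_def, div_le_div_iff₀ hτ hc, hτ_def, hσ]
      field_simp
      exact hμ
    -- the privacy loss `log (dγ₁ / dγ₂)` is `η * Z + η ^ 2 / 2`
    have hdens : (Measure.pi fun i => gaussianReal (μ₁ i) v) =
        (Measure.pi fun i => gaussianReal (μ₂ i) v).withDensity
          (fun x => ENNReal.ofReal (Real.exp (η * Z x + η ^ 2 / 2))) := by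
      have hfam := fun i => gaussianReal_eq_withDensity_gaussianReal (μ₁ i) (μ₂ i) hv0
      have hprob : ∀ i, IsProbabilityMeasure ((gaussianReal (μ₂ i) v).withDensity
          (fun x => ENNReal.ofReal (Real.exp (((μ₁ i - μ₂ i) * (x - μ₁ i)) / v +
            (μ₁ i - μ₂ i) ^ 2 / (2 * v))))) := fun i => by
        rw [← hfam i]; infer_instance
      have hpi := pi_withDensity_prod (fun i => gaussianReal (μ₂ i) v)
        (fun i x => ENNReal.ofReal (Real.exp (((μ₁ i - μ₂ i) * (x - μ₁ i)) / v +
            (μ₁ i - μ₂ i) ^ 2 / (2 * v)))) (fun i => by fun_prop)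
      simp_rw [← hfam] at hpi
      rw [hpi]
      congr 1
      ext x
      rw [← ENNReal.ofReal_prod_of_nonneg fun i _ => (Real.exp_pos _).le, ← Real.exp_sum]
      congr 2
      rw [Finset.sum_add_distrib, ← Finset.sum_div _ _ (2 * (v : ℝ)), ← hr2, hZ, Finset.mul_sum,
        hv, hη_def]
      congr 1
      · refine Finset.sum_congr rfl fun i _ => ?_
        field_simp
      · field_simp
    set G : Set (Fin d → ℝ) := {x | η * Z x + η ^ 2 / 2 ≤ ε} with hG_def
    have hG : MeasurableSet G := measurableSet_le (by fun_prop) measurable_const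
    have hgood : (Measure.pi fun i => gaussianReal (μ₁ i) v) (S ∩ G) ≤
        ENNReal.ofReal (Real.exp ε) * (Measure.pi fun i => gaussianReal (μ₂ i) v) S := by
      rw [hdens, withDensity_apply _ (hS.inter hG)]
      calc _ ≤ ∫⁻ _ in S ∩ G, ENNReal.ofReal (Real.exp ε)
              ∂(Measure.pi fun i => gaussianReal (μ₂ i) v) :=
            setLIntegral_mono measurable_const fun x hx =>
              ENNReal.ofReal_le_ofReal (Real.exp_le_exp.2 hx.2)
        _ ≤ _ := by
            rw [setLIntegral_const]
            gcongr
            exact Set.inter_subset_left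
    have hbad : (Measure.pi fun i => gaussianReal (μ₁ i) v) (S \ G) ≤ ENNReal.ofReal δ := by
      refine le_trans ?_ (gaussianReal_Ioi_le_delta hε1 hδ hδ1 hc hc2)
      rw [← hZlaw, Measure.map_apply hZm measurableSet_Ioi]
      refine measure_mono fun x hx => ?_
      have hx' : ε < η * Z x + η ^ 2 / 2 := not_le.1 hx.2
      -- `ε / η - η / 2` decreases in `η`, and equals `c - ε / (2 c)` at `η = ε / c`
      have h1 : c ≤ ε / η := by
        rw [le_div_iff₀ hη]
        rw [le_div_iff₀ hc] at hηle
        linarith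
      have h2 : ε / η < Z x + η / 2 := by
        rw [div_lt_iff₀ hη]
        nlinarith
      have h3 : ε / (2 * c) = ε / c / 2 := by field_simp
      change c - ε / (2 * c) < Z x
      rw [h3]
      linarith
    rw [← measure_inter_add_sdiff S hG]
    exact add_le_add hgood hbad
end

section
/- Let H be a real Hilbert space, μ̂ ∈ H, e ∈ H, μ̃ = μ̂ + e, 𝒬 a nonempty set, and F : 𝒬 → H. Suppose Q̃ ∈ 𝒬 minimizes q ↦ ‖μ̃ − F(q)‖ over 𝒬 and R̂ ∈ 𝒬 minimizes q ↦ ‖μ̂ − F(q)‖ over 𝒬. Then the excess squared loss of the private minimizer obeys ‖μ̂ − F(Q̃)‖² − ‖μ̂ − F(R̂)‖² ≤ 4‖e‖·‖μ̂ − F(R̂)‖ + 4‖e‖². -/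
/-- If `Q̃` minimizes the privatized loss `q ↦ ‖(μ̂ + e) − F q‖` and `R̂` minimizes the
non-private loss `q ↦ ‖μ̂ − F q‖` over a nonempty class `𝒬`, then the excess squared loss
obeys `‖μ̂ − F Q̃‖² − ‖μ̂ − F R̂‖² ≤ 4‖e‖‖μ̂ − F R̂‖ + 4‖e‖²`. -/
theorem private_minimizer_excess_sq_loss {H : Type*} [NormedAddCommGroup H]
    [InnerProductSpace ℝ H] {Q : Type*} [Nonempty Q]
    (muHat e : H) (F : Q → H) (Qtilde Rhat : Q)
    (hQtilde : ∀ q : Q, ‖(muHat + e) - F Qtilde‖ ≤ ‖(muHat + e) - F q‖)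
    (hRhat : ∀ q : Q, ‖muHat - F Rhat‖ ≤ ‖muHat - F q‖) :
    ‖muHat - F Qtilde‖ ^ 2 - ‖muHat - F Rhat‖ ^ 2 ≤
      4 * ‖e‖ * ‖muHat - F Rhat‖ + 4 * ‖e‖ ^ 2 := by
  -- Two triangle inequalities around the optimality of `Q̃` give an excess unsquared loss of at most
  -- `2‖e‖`; squaring that bound gives the claim.
  have h1 : ‖muHat - F Qtilde‖ ≤ ‖(muHat + e) - F Qtilde‖ + ‖e‖ := by
    have h := norm_sub_le ((muHat + e) - F Qtilde) e
    rwa [show (muHat + e) - F Qtilde - e = muHat - F Qtilde by abel] at h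
  have h2 : ‖(muHat + e) - F Rhat‖ ≤ ‖muHat - F Rhat‖ + ‖e‖ := by
    have h := norm_add_le (muHat - F Rhat) e
    rwa [show muHat - F Rhat + e = (muHat + e) - F Rhat by abel] at h
  have h3 : ‖muHat - F Qtilde‖ ≤ ‖muHat - F Rhat‖ + 2 * ‖e‖ := by
    linarith [hQtilde Rhat]
  have h4 := pow_le_pow_left₀ (norm_nonneg _) h3 2
  linarith [add_sq ‖muHat - F Rhat‖ (2 * ‖e‖)]
end
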